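/- Let G = (V, E) and Ḡ = (V̄, Ē) be path-complete graphs over the same finite alphabet Σ. Then the following are equivalent: (1) G simulates Ḡ, i.e., there exists a function R : V̄ → V such that (v̄, σ, v̄') ∈ Ē implies (R(v̄), σ, R(v̄')) ∈ E; (2) G ⪯ Ḡ in the ordering of path-complete barrier functions. -/

import Mathlib

/-- A graph `(V, E)` over the alphabet `A` is path-complete if every finite
word of every length `k ≥ 1` is accepted by the graph. -/
def PathComplete {V A : Type} (E : Set (V × A × V)) : Prop :=
  ∀ k : ℕ, 1 ≤ k → ∀ w : Fin k → A,
    ∃ v : Fin (k + 1) → V, ∀ i : Fin k, (v i.castSucc, w i, v i.succ) ∈ E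

/-- `{B_v}` is a graph-based barrier function for the switched system with
modes `f σ` on `ℝⁿ` and the sets `X0`, `Xu`, on the graph `(V, E)`. -/
def GraphBarrier {V A : Type} {n : ℕ} (E : Set (V × A × V))
    (f : A → (Fin n → ℝ) → (Fin n → ℝ)) (X0 Xu : Set (Fin n → ℝ))
    (B : V → (Fin n → ℝ) → ℝ) : Prop :=
  (∀ v : V, ∀ x ∈ X0, B v x ≤ 0) ∧
  (∀ v : V, ∀ x ∈ Xu, 0 < B v x) ∧
  (∀ e ∈ E, ∀ x : Fin n → ℝ, B e.2.2 (f e.2.1 x) ≤ B e.1 x)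

/-- The ordering `G ⪯ Ḡ` of path-complete graphs: for every dimension `n`,
every switched system over the alphabet on `ℝⁿ`, every pair of sets
`X0, Xu ⊆ ℝⁿ` and every template `T`, the existence of a barrier function on
`G` within `T` implies the existence of one on `Ḡ` within `T`. -/
def PCOrder {V V' A : Type} (E : Set (V × A × V)) (E' : Set (V' × A × V')) : Prop :=
  ∀ (n : ℕ) (f : A → (Fin n → ℝ) → (Fin n → ℝ))
    (X0 Xu : Set (Fin n → ℝ)) (T : Set ((Fin n → ℝ) → ℝ)),
    (∃ B : V → (Fin n → ℝ) → ℝ, (∀ v : V, B v ∈ T) ∧ GraphBarrier E f X0 Xu B) →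
    (∃ B' : V' → (Fin n → ℝ) → ℝ, (∀ v' : V', B' v' ∈ T) ∧ GraphBarrier E' f X0 Xu B')

/-!
A simulation `R` pulls a barrier `B` on `G` back to the barrier `B ∘ R` on `Ḡ`.

Conversely, apply the subset construction to `G`: the states are the sets `S` of vertices, the
mode `σ` sends `S` to its `σ`-successors, and `B_v` vanishes at `S` if `v ∈ S` and is `1`
otherwise. This is a barrier on `G` with initial state `V` and unsafe state `∅`, because the
inequality `B_{v'} ∘ f_σ ≤ B_v` holds along edges. Tested at `S = {v}`, it holds only along edges.
Hence a barrier on `Ḡ` with the template `{B_v}` amounts to a map `V̄ → V` that sends edges to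
edges. The sets of vertices can be coded by real numbers because there are at most continuum many
of them.
-/

/-- `R` is a simulation: it maps the edges of `E'` to edges of `E` with the same label, so that the
graph `E` simulates the graph `E'`. -/
def IsSimulation {V V' A : Type*} (E : Set (V × A × V)) (E' : Set (V' × A × V')) (R : V' → V) :
    Prop :=
  ∀ e ∈ E', (R e.1, e.2.1, R e.2.2) ∈ E

section Pullback

variable {V V' A : Type} {E : Set (V × A × V)} {E' : Set (V' × A × V')} {R : V' → V}

theorem GraphBarrier.comp_isSimulation {n : ℕ} {f : A → (Fin n → ℝ) → (Fin n → ℝ)}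
    {X0 Xu : Set (Fin n → ℝ)} {B : V → (Fin n → ℝ) → ℝ} (hB : GraphBarrier E f X0 Xu B)
    (hR : IsSimulation E E' R) : GraphBarrier E' f X0 Xu (B ∘ R) := by
  obtain ⟨hX0, hXu, hE⟩ := hB
  exact ⟨fun v => hX0 (R v), fun v => hXu (R v), fun e he => hE _ (hR e he)⟩

theorem IsSimulation.pcOrder (hR : IsSimulation E E' R) : PCOrder E E' := by
  rintro n f X0 Xu T ⟨B, hT, hB⟩
  exact ⟨B ∘ R, fun v => hT (R v), hB.comp_isSimulation hR⟩

end Pullback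

section SubsetConstruction

/-- The set of `σ`-successors of the vertices in `S`, that is, the transition map of the subset
construction. -/
def successors {V A : Type*} (E : Set (V × A × V)) (σ : A) (S : Set V) : Set V :=
  {v' | ∃ v ∈ S, (v, σ, v') ∈ E}

theorem mem_edges_iff_forall_mem_successors {V A : Type*} {E : Set (V × A × V)} {v v' : V} {σ : A} :
    (v, σ, v') ∈ E ↔ ∀ S : Set V, v ∈ S → v' ∈ successors E σ S := by
  refine ⟨fun he S hv => ⟨v, hv, he⟩, fun h => ?_⟩
  obtain ⟨_, rfl, he⟩ := h {v} rfl
  exact he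

/-- The value at the state `S` of the barrier function of the vertex `v` in the subset construction:
`0` if `v ∈ S` and `1` otherwise. -/
noncomputable def nonmembership {V : Type*} (v : V) (S : Set V) : ℝ :=
  Sᶜ.indicator 1 v

theorem nonmembership_le_nonmembership_iff {V W : Type*} {v : V} {w : W} {S : Set V} {T : Set W} :
    nonmembership v S ≤ nonmembership w T ↔ (w ∈ T → v ∈ S) := by
  by_cases hv : v ∈ S <;> by_cases hw : w ∈ T <;> simp [nonmembership, hv, hw]

theorem mem_edges_iff_forall_nonmembership_le {V A : Type*} {E : Set (V × A × V)} {v v' : V}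
    {σ : A} :
    (v, σ, v') ∈ E ↔ ∀ S, nonmembership v' (successors E σ S) ≤ nonmembership v S := by
  simp only [nonmembership_le_nonmembership_iff, mem_edges_iff_forall_mem_successors]

variable {V V' A : Type} {n : ℕ} {enc : Set V → Fin n → ℝ} {dec : (Fin n → ℝ) → Set V}

/-- The switched system of the subset construction, transported to `ℝⁿ` along an encoding `enc` of
the sets of vertices and a decoding `dec`. -/
def subsetSystem (E : Set (V × A × V)) (enc : Set V → Fin n → ℝ) (dec : (Fin n → ℝ) → Set V)
    (σ : A) (x : Fin n → ℝ) : Fin n → ℝ :=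
  enc (successors E σ (dec x))

theorem mem_edges_iff_forall_subsetSystem_le {E : Set (V × A × V)}
    (hdec : Function.LeftInverse dec enc) {v v' : V} {σ : A} :
    (v, σ, v') ∈ E ↔
      ∀ x, nonmembership v' (dec (subsetSystem E enc dec σ x)) ≤ nonmembership v (dec x) := by
  simp only [mem_edges_iff_forall_nonmembership_le, subsetSystem, hdec _, hdec.surjective.forall]

theorem graphBarrier_subsetSystem (E : Set (V × A × V)) (hdec : Function.LeftInverse dec enc) :
    GraphBarrier E (subsetSystem E enc dec) {enc Set.univ} {enc ∅}
      (fun v x => nonmembership v (dec x)) := by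
  refine ⟨?_, ?_, fun e he => (mem_edges_iff_forall_subsetSystem_le hdec).mp he⟩
  · rintro v _ rfl
    simp [nonmembership, hdec _]
  · rintro v _ rfl
    simp [nonmembership, hdec _]

theorem PCOrder.exists_isSimulation_of_leftInverse {E : Set (V × A × V)}
    {E' : Set (V' × A × V')} (h : PCOrder E E') (hdec : Function.LeftInverse dec enc) :
    ∃ R, IsSimulation E E' R := by
  obtain ⟨B', hT, -, -, hE'⟩ := h n _ _ _ (Set.range fun v x => nonmembership v (dec x))
    ⟨_, Set.mem_range_self, graphBarrier_subsetSystem E hdec⟩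
  choose R hR using hT
  refine ⟨R, fun e he => (mem_edges_iff_forall_subsetSystem_le hdec).mpr fun x => ?_⟩
  simpa only [← hR] using hE' e he x

end SubsetConstruction

theorem nonempty_set_embedding_real (V : Type*) [Countable V] : Nonempty (Set V ↪ ℝ) := by
  rw [← Cardinal.lift_mk_le', Cardinal.mk_real, Cardinal.lift_continuum,
    Cardinal.lift_le_continuum]
  calc Cardinal.mk (Set V) = 2 ^ Cardinal.mk V := Cardinal.mk_set
    _ ≤ 2 ^ Cardinal.aleph0 :=
      Cardinal.power_le_power_left two_ne_zero Cardinal.mk_le_aleph0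
    _ = Cardinal.continuum := Cardinal.two_power_aleph0

theorem simulation_iff_order_general {V V' A : Type} [Countable V]
    (E : Set (V × A × V)) (E' : Set (V' × A × V')) :
    (∃ R, IsSimulation E E' R) ↔ PCOrder E E' := by
  refine ⟨fun ⟨_, hR⟩ => hR.pcOrder, fun h => ?_⟩
  obtain ⟨code⟩ := nonempty_set_embedding_real V
  have henc : Function.Injective (Function.const (Fin 1) ∘ code) :=
    Function.const_injective.comp code.injective
  exact h.exists_isSimulation_of_leftInverse (Function.leftInverse_invFun henc)

/-- for path-complete graphs `G` and `Ḡ` over the same finite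
alphabet, the following are equivalent: (1) `G` simulates `Ḡ`, i.e. there is
`R : V̄ → V` with `(v̄, σ, v̄') ∈ Ē → (R v̄, σ, R v̄') ∈ E`; (2) `G ⪯ Ḡ` in the
ordering of path-complete barrier functions. -/
theorem simulation_iff_order {V V' A : Type}
    [Fintype V] [Fintype V'] [Fintype A]
    (E : Set (V × A × V)) (E' : Set (V' × A × V'))
    (hG : PathComplete E) (hG' : PathComplete E') :
    (∃ R : V' → V, ∀ e ∈ E', (R e.1, e.2.1, R e.2.2) ∈ E) ↔ PCOrder E E' :=
  simulation_iff_order_general E E'
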